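/- arXiv:1111.6156 — 3 statements merged into one kernel-verified Lean document; each statement's English description precedes it below -/
import Mathlib

section
/- Consider the monotone symmetric congestion game G with 3 players, resources R = {A, B, C}, strategy set Σ consisting of all two-element subsets of R, and payoffs P_A(1)=10, P_A(2)=8, P_A(3)=1; P_B(1)=10, P_B(2)=4, P_B(3)=1; P_C(1)=8, P_C(2)=6, P_C(3)=5. Then NE(G) ∩ Z(G) = ∅: no greedy profile of G is a pure Nash equilibrium. -/
/-!
The greedy outcome is unique up to renaming the players: the first mover takes `{0, 1}`
(20 against 18 for either alternative), the second `{0, 2}` (16 against 12), the third `{1, 2}`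
(10 against 5 and 7). Every resource is then used twice, so the first mover earns `8 + 4 = 12`.
Switching to `{0, 2}` leaves two users on resource `0` and puts three on resource `2`, which gives
`8 + 5 = 13`; hence the profile is not a Nash equilibrium. `no_greedy_NE_of_order` carries this out
for an arbitrary naming `a`, `b`, `c` of the movers, and an injective ranking of three players
always provides such a naming.
-/

open Finset

/-- Congestion of resource `r` under strategy profile `s` (players `ι`). -/
def cgCong {ρ ι : Type} [DecidableEq ρ] [Fintype ι] (s : ι → Finset ρ) (r : ρ) : ℕ :=
  (Finset.univ.filter (fun i => r ∈ s i)).card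

/-- Utility of player `i`: the sum of `P r (c(s)_r)` over the resources she uses. -/
def cgUtil {ρ ι : Type} [DecidableEq ρ] [Fintype ι] (P : ρ → ℕ → ℝ)
    (s : ι → Finset ρ) (i : ι) : ℝ :=
  ∑ r ∈ s i, P r (cgCong s r)

/-- A strategy profile: every player selects a strategy from the strategy set `SS`. -/
def IsProfile {ρ ι : Type} (SS : Finset (Finset ρ)) (s : ι → Finset ρ) : Prop :=
  ∀ i, s i ∈ SS

/-- Pure Nash equilibrium. -/
def IsNE {ρ ι : Type} [DecidableEq ρ] [DecidableEq ι] [Fintype ι]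
    (SS : Finset (Finset ρ)) (P : ρ → ℕ → ℝ) (s : ι → Finset ρ) : Prop :=
  IsProfile SS s ∧
    ∀ i : ι, ∀ t ∈ SS, cgUtil P s i ≥ cgUtil P (Function.update s i t) i

/-- The congestion seen by player `i` on resource `r` from players preceding her
in the order `π`. -/
def greedyCong {ρ ι : Type} [DecidableEq ρ] [Fintype ι] (s : ι → Finset ρ)
    (π : ι → ℕ) (i : ι) (r : ρ) : ℕ :=
  (Finset.univ.filter (fun j => r ∈ s j ∧ π j < π i)).card

/-- Greedy profile: for some linear order (injective ranking `π`) of the players,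
each player's strategy is a best response to the choices of her predecessors. -/
def IsGreedy {ρ ι : Type} [DecidableEq ρ] [Fintype ι]
    (SS : Finset (Finset ρ)) (P : ρ → ℕ → ℝ) (s : ι → Finset ρ) : Prop :=
  IsProfile SS s ∧
    ∃ π : ι → ℕ, Function.Injective π ∧ ∀ i : ι, ∀ t ∈ SS,
      (∑ r ∈ s i, P r (greedyCong s π i r + 1)) ≥
        ∑ r ∈ t, P r (greedyCong s π i r + 1)

/-- Monotone resource payoffs (for a game with `n` players):
`P_r(k) > P_r(l)` whenever `1 ≤ k < l ≤ n`. -/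
def MonotonePay {ρ : Type} (n : ℕ) (P : ρ → ℕ → ℝ) : Prop :=
  ∀ r : ρ, ∀ k l : ℕ, 1 ≤ k → k < l → l ≤ n → P r k > P r l

/-- A congestion game form: nonempty strategy set consisting of nonempty resource sets. -/
def ValidForm {ρ : Type} (SS : Finset (Finset ρ)) : Prop :=
  SS.Nonempty ∧ ∀ s ∈ SS, s.Nonempty

/-- Subset-free strategy set. -/
def SubsetFree {ρ : Type} (SS : Finset (Finset ρ)) : Prop :=
  ∀ s ∈ SS, ∀ t ∈ SS, s ≠ t → ¬ s ⊆ t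

/-- A bad configuration (Holzman–Law Yone): a form is tree representable iff
it has no bad configuration. -/
def BadConfig {ρ : Type} (SS : Finset (Finset ρ)) : Prop :=
  ∃ A B : ρ, ∃ s1 ∈ SS, ∃ s2 ∈ SS, ∃ s3 ∈ SS,
    A ∈ s1 ∧ B ∈ s1 ∧ A ∈ s2 ∧ A ∉ s3 ∧ B ∈ s3 ∧ B ∉ s2

/-- Payoffs of Example 1: resources A=0, B=1, C=2; three players. -/
def pay16 : Fin 3 → ℕ → ℝ := fun r k =>
  if k = 1 then ![10, 10, 8] r
  else if k = 2 then ![8, 4, 6] r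
  else if k = 3 then ![1, 1, 5] r
  else 0

/-- Strategy set of Example 1: all two-element subsets of {A, B, C}. -/
def strat16 : Finset (Finset (Fin 3)) := {{0, 1}, {0, 2}, {1, 2}}

/-- The sum over all players, expanded along any enumeration of the three players. -/
lemma sum_three {a b c : Fin 3} (hab : a ≠ b) (hac : a ≠ c) (hbc : b ≠ c) (f : Fin 3 → ℕ) :
    ∑ i, f i = f a + f b + f c := by
  have huniv : (Finset.univ : Finset (Fin 3)) = {a, b, c} := by
    revert a b c
    decide
  rw [huniv, Finset.sum_insert (by simp [hab, hac]), Finset.sum_insert (by simp [hbc]),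
    Finset.sum_singleton, add_assoc]

lemma pay16_values :
    (pay16 0 1 = 10 ∧ pay16 0 2 = 8 ∧ pay16 0 3 = 1) ∧
    (pay16 1 1 = 10 ∧ pay16 1 2 = 4 ∧ pay16 1 3 = 1) ∧
    (pay16 2 1 = 8 ∧ pay16 2 2 = 6 ∧ pay16 2 3 = 5) := by
  simp [pay16]

/-- The contradiction when the players move in the order `a`, `b`, `c`. -/
lemma no_greedy_NE_of_order (s : Fin 3 → Finset (Fin 3)) (π : Fin 3 → ℕ)
    (hs : ∀ i, s i ∈ strat16)
    (hg : ∀ i : Fin 3, ∀ t ∈ strat16,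
      (∑ r ∈ s i, pay16 r (greedyCong s π i r + 1)) ≥
        ∑ r ∈ t, pay16 r (greedyCong s π i r + 1))
    (hne : ∀ i : Fin 3, ∀ t ∈ strat16,
      cgUtil pay16 s i ≥ cgUtil pay16 (Function.update s i t) i)
    {a b c : Fin 3} (h₁ : π a < π b) (h₂ : π b < π c) : False := by
  have hab : a ≠ b := by rintro rfl; omega
  have hbc : b ≠ c := by rintro rfl; omega
  have hac : a ≠ c := by rintro rfl; omega
  have h₃ : π a < π c := h₁.trans h₂
  have ga : ∀ r, greedyCong s π a r = 0 := fun r => by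
    rw [greedyCong, Finset.card_filter, sum_three hab hac hbc]
    norm_num [h₁.le, h₃.le]
  have gb : ∀ r, greedyCong s π b r = if r ∈ s a then 1 else 0 := fun r => by
    rw [greedyCong, Finset.card_filter, sum_three hab hac hbc]
    simp [h₁, h₂.le]
  have gc : ∀ r, greedyCong s π c r =
      (if r ∈ s a then 1 else 0) + if r ∈ s b then 1 else 0 := fun r => by
    rw [greedyCong, Finset.card_filter, sum_three hab hac hbc]
    simp [h₂, h₃]
  have m01 : ({0, 1} : Finset (Fin 3)) ∈ strat16 := by simp [strat16]
  have m02 : ({0, 2} : Finset (Fin 3)) ∈ strat16 := by simp [strat16]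
  have m12 : ({1, 2} : Finset (Fin 3)) ∈ strat16 := by simp [strat16]
  have hmem : ∀ i, s i = {0, 1} ∨ s i = {0, 2} ∨ s i = {1, 2} := fun i => by
    simpa [strat16] using hs i
  have S01 : ∀ f : Fin 3 → ℝ, ∑ r ∈ {0, 1}, f r = f 0 + f 1 := fun f =>
    Finset.sum_pair (by decide)
  have S02 : ∀ f : Fin 3 → ℝ, ∑ r ∈ {0, 2}, f r = f 0 + f 2 := fun f =>
    Finset.sum_pair (by decide)
  have S12 : ∀ f : Fin 3 → ℝ, ∑ r ∈ {1, 2}, f r = f 1 + f 2 := fun f =>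
    Finset.sum_pair (by decide)
  -- The first mover faces the payoffs 10, 10, 8.
  have sa : s a = {0, 1} := by
    have h := hg a _ m01
    rcases hmem a with e | e | e
    · exact e
    all_goals
      simp only [e, S01, S02, S12, ga, zero_add, pay16_values] at h
      norm_num at h
  -- The second mover faces the payoffs 8, 4, 8.
  have gb0 : greedyCong s π b 0 + 1 = 2 := by rw [gb, sa]; decide
  have gb1 : greedyCong s π b 1 + 1 = 2 := by rw [gb, sa]; decide
  have gb2 : greedyCong s π b 2 + 1 = 1 := by rw [gb, sa]; decide
  have sb : s b = {0, 2} := by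
    have h := hg b _ m02
    rcases hmem b with e | e | e
    · simp only [e, S01, S02, gb0, gb1, gb2, pay16_values] at h
      norm_num at h
    · exact e
    · simp only [e, S02, S12, gb0, gb1, gb2, pay16_values] at h
      norm_num at h
  -- The third mover faces the payoffs 1, 4, 6.
  have gc0 : greedyCong s π c 0 + 1 = 3 := by rw [gc, sa, sb]; decide
  have gc1 : greedyCong s π c 1 + 1 = 2 := by rw [gc, sa, sb]; decide
  have gc2 : greedyCong s π c 2 + 1 = 2 := by rw [gc, sa, sb]; decide
  have sc : s c = {1, 2} := by
    have h := hg c _ m12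
    rcases hmem c with e | e | e
    · simp only [e, S01, S12, gc0, gc1, gc2, pay16_values] at h
      norm_num at h
    · simp only [e, S02, S12, gc0, gc1, gc2, pay16_values] at h
      norm_num at h
    · exact e
  have hcong : ∀ (u : Fin 3 → Finset (Fin 3)) (r : Fin 3), cgCong u r =
      (if r ∈ u a then 1 else 0) + (if r ∈ u b then 1 else 0) + if r ∈ u c then 1 else 0 :=
    fun u r => by rw [cgCong, Finset.card_filter, sum_three hab hac hbc]
  have c0 : cgCong s 0 = 2 := by rw [hcong, sa, sb, sc]; decide
  have c1 : cgCong s 1 = 2 := by rw [hcong, sa, sb, sc]; decide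
  have d0 : cgCong (Function.update s a {0, 2}) 0 = 2 := by
    rw [hcong, Function.update_self, Function.update_of_ne hab.symm,
      Function.update_of_ne hac.symm, sb, sc]
    decide
  have d2 : cgCong (Function.update s a {0, 2}) 2 = 3 := by
    rw [hcong, Function.update_self, Function.update_of_ne hab.symm,
      Function.update_of_ne hac.symm, sb, sc]
    decide
  -- The first mover now earns 8 + 4, while `{0, 2}` would give her 8 + 5.
  have h := hne a _ m02
  simp only [cgUtil, Function.update_self, sa, S01, S02, c0, c1, d0, d2, pay16_values] at h
  norm_num at h

/-- In the 3-player game of Example 1, no greedy profile is a pure Nash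
equilibrium: `NE(G) ∩ Z(G) = ∅`. -/
theorem NE_inter_greedy_empty :
    ∀ s : Fin 3 → Finset (Fin 3),
      ¬ (IsGreedy strat16 pay16 s ∧ IsNE strat16 pay16 s) := by
  rintro s ⟨⟨hs, π, hπ, hg⟩, -, hne⟩
  have key : ∀ a b c : Fin 3, π a < π b → π b < π c → False := fun a b c h₁ h₂ =>
    no_greedy_NE_of_order s π hs hg hne h₁ h₂
  have h01 : π 0 ≠ π 1 := hπ.ne (by decide)
  have h02 : π 0 ≠ π 2 := hπ.ne (by decide)
  have h12 : π 1 ≠ π 2 := hπ.ne (by decide)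
  rcases lt_or_gt_of_ne h01 with p | p <;> rcases lt_or_gt_of_ne h02 with q | q <;>
    rcases lt_or_gt_of_ne h12 with r | r
  · exact key 0 1 2 p r
  · exact key 0 2 1 q r
  · omega
  · exact key 2 0 1 q p
  · exact key 1 0 2 p q
  · omega
  · exact key 1 2 0 r q
  · exact key 2 1 0 r p
end

section
/- Consider the monotone symmetric congestion game G with 2 players, resources R = {A, B, C, D}, strategy set Σ = {{A,C}, {A,D}, {B,C}, {B,D}}, and payoffs P_A(1)=40, P_A(2)=10; P_B(1)=30, P_B(2)=11; P_C(1)=20, P_C(2)=12; P_D(1)=15, P_D(2)=13. Then Z(G) is strictly contained in NE(G): every greedy profile of G is a pure Nash equilibrium, and the profile in which one player plays {A,D} and the other plays {B,C} is a pure Nash equilibrium that is not a greedy profile. -/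
/-!
In this two-player game everything reduces to best responses against the set of resources that the
opponent already occupies: a resource `r` pays `pay17 r 2` if it is occupied and `pay17 r 1`
otherwise. A profile is a Nash equilibrium iff the two strategies are mutual best responses
(`isNE_iff`), and in a greedy profile one strategy is a best response to `∅` and the other one is a
best response to it (`IsGreedy.exists_order`).

Writing `A, B, C, D` for `0, 1, 2, 3`, the unique best response to `∅` is `AC`, and the unique best
response to `AC` is `BD`. So only `(AC, BD)` and `(BD, AC)` can be greedy. As `AC` is also a
best response to `BD`, these are equilibria. The strategies `AD` and `BC` are best responses
to each other, but neither is `AC`.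
-/

open Finset

/-- Payoffs of Example 2: resources A=0, B=1, C=2, D=3; two players. -/
def pay17 : Fin 4 → ℕ → ℝ := fun r k =>
  if k = 1 then ![40, 30, 20, 15] r
  else if k = 2 then ![10, 11, 12, 13] r
  else 0

/-- Strategy set of Example 2: one of {A, B} together with one of {C, D}. -/
def strat17 : Finset (Finset (Fin 4)) := {{0, 2}, {0, 3}, {1, 2}, {1, 3}}

/-- The payoff of playing `t` when the opponent occupies the resources in `u`. -/
def respPay (u t : Finset (Fin 4)) : ℝ := ∑ r ∈ t, pay17 r (if r ∈ u then 2 else 1)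

/-- `t` is at least as good as every strategy when the opponent occupies the resources in `u`.
The set `u` may be empty, and `t` itself is not required to be a strategy. -/
def BestResp (u t : Finset (Fin 4)) : Prop := ∀ t' ∈ strat17, respPay u t' ≤ respPay u t

lemma cgUtil_update {s : Fin 2 → Finset (Fin 4)} {i j : Fin 2} (hij : i ≠ j)
    (t : Finset (Fin 4)) :
    cgUtil pay17 (Function.update s i t) i = respPay (s j) t := by
  unfold cgUtil respPay
  rw [Function.update_self]
  refine Finset.sum_congr rfl fun r hr => ?_
  congr 1
  unfold cgCong
  rw [Finset.card_filter, Fin.sum_univ_two]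
  fin_cases i <;> fin_cases j <;> simp_all [Function.update] <;> split_ifs <;> rfl

lemma isNE_iff (s : Fin 2 → Finset (Fin 4)) :
    IsNE strat17 pay17 s ↔
      IsProfile strat17 s ∧ BestResp (s 1) (s 0) ∧ BestResp (s 0) (s 1) := by
  have h0 : ∀ t, cgUtil pay17 (Function.update s 0 t) 0 = respPay (s 1) t :=
    cgUtil_update (by decide)
  have h1 : ∀ t, cgUtil pay17 (Function.update s 1 t) 1 = respPay (s 0) t :=
    cgUtil_update (by decide)
  have e0 := h0 (s 0)
  have e1 := h1 (s 1)
  rw [Function.update_eq_self] at e0 e1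
  simp only [IsNE, Fin.forall_fin_two, h0, h1, e0, e1, BestResp, ge_iff_le]

/-- In a greedy profile the player `i` who moves first responds to `∅`, and the other player `j`
responds to the strategy of `i`. -/
lemma IsGreedy.exists_order {s : Fin 2 → Finset (Fin 4)} (h : IsGreedy strat17 pay17 s) :
    ∃ i j : Fin 2, i ≠ j ∧ BestResp ∅ (s i) ∧ BestResp (s i) (s j) := by
  obtain ⟨-, π, hπ, hbest⟩ := h
  have key : ∀ i j : Fin 2, i ≠ j → π i < π j →
      ∃ i j : Fin 2, i ≠ j ∧ BestResp ∅ (s i) ∧ BestResp (s i) (s j) := by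
    intro i j hij hlt
    have hi : ∀ r, greedyCong s π i r + 1 = if r ∈ (∅ : Finset (Fin 4)) then 2 else 1 := by
      intro r
      unfold greedyCong
      rw [Finset.card_filter, Fin.sum_univ_two]
      fin_cases i <;> fin_cases j <;> simp_all [le_of_lt]
    have hj : ∀ r, greedyCong s π j r + 1 = if r ∈ s i then 2 else 1 := by
      intro r
      unfold greedyCong
      rw [Finset.card_filter, Fin.sum_univ_two]
      fin_cases i <;> fin_cases j <;> simp_all <;> split_ifs <;> rfl
    refine ⟨i, j, hij, fun t ht => ?_, fun t ht => ?_⟩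
    · simpa only [hi, respPay] using hbest i t ht
    · simpa only [hj, respPay] using hbest j t ht
  rcases lt_or_gt_of_ne (hπ.ne (show (0 : Fin 2) ≠ 1 by decide)) with hlt | hlt
  · exact key 0 1 (by decide) hlt
  · exact key 1 0 (by decide) hlt

lemma forall_mem_strat17 {p : Finset (Fin 4) → Prop} :
    (∀ t ∈ strat17, p t) ↔ p {0, 2} ∧ p {0, 3} ∧ p {1, 2} ∧ p {1, 3} := by
  simp [strat17]

lemma respPay_pair (u : Finset (Fin 4)) {a b : Fin 4} (h : a ≠ b) :
    respPay u {a, b} =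
      pay17 a (if a ∈ u then 2 else 1) + pay17 b (if b ∈ u then 2 else 1) :=
  Finset.sum_pair h

lemma eq_AC_of_bestResp_empty :
    ∀ t ∈ strat17, BestResp ∅ t → t = {0, 2} := by
  rw [forall_mem_strat17]
  simp only [BestResp, forall_mem_strat17]
  simp [respPay_pair, pay17]
  norm_num

lemma eq_BD_of_bestResp_AC :
    ∀ t ∈ strat17, BestResp {0, 2} t → t = {1, 3} := by
  rw [forall_mem_strat17]
  simp only [BestResp, forall_mem_strat17]
  simp [respPay_pair, pay17]
  norm_num

lemma bestResp_AC_BD : BestResp {0, 2} {1, 3} := by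
  rw [BestResp, forall_mem_strat17]
  simp [respPay_pair, pay17]
  norm_num

lemma bestResp_BD_AC : BestResp {1, 3} {0, 2} := by
  rw [BestResp, forall_mem_strat17]
  simp [respPay_pair, pay17]
  norm_num

lemma bestResp_AD_BC : BestResp {0, 3} {1, 2} := by
  rw [BestResp, forall_mem_strat17]
  simp [respPay_pair, pay17]
  norm_num

lemma bestResp_BC_AD : BestResp {1, 2} {0, 3} := by
  rw [BestResp, forall_mem_strat17]
  simp [respPay_pair, pay17]
  norm_num

/-- The greedy profiles are among `(AC, BD)` and `(BD, AC)`. -/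
lemma IsGreedy.eq_or_eq {s : Fin 2 → Finset (Fin 4)} (h : IsGreedy strat17 pay17 s) :
    (s 0 = {0, 2} ∧ s 1 = {1, 3}) ∨ (s 0 = {1, 3} ∧ s 1 = {0, 2}) := by
  obtain ⟨i, j, hij, hi, hj⟩ := h.exists_order
  have ei := eq_AC_of_bestResp_empty _ (h.1 i) hi
  rw [ei] at hj
  have ej := eq_BD_of_bestResp_AC _ (h.1 j) hj
  fin_cases i <;> fin_cases j
  · exact absurd rfl hij
  · exact Or.inl ⟨ei, ej⟩
  · exact Or.inr ⟨ej, ei⟩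
  · exact absurd rfl hij

/-- In the 2-player game of Example 2, greedy profiles are strictly contained
in Nash equilibria: every greedy profile is a pure NE, while the profile
`(AD, BC)` is a pure NE that is not greedy. -/
theorem greedy_strict_subset_NE :
    (∀ s : Fin 2 → Finset (Fin 4),
        IsGreedy strat17 pay17 s → IsNE strat17 pay17 s) ∧
      IsNE strat17 pay17 ![{0, 3}, {1, 2}] ∧
      ¬ IsGreedy strat17 pay17 ![{0, 3}, {1, 2}] := by
  refine ⟨fun s h => ?_, ?_, fun h => ?_⟩
  · rw [isNE_iff]
    refine ⟨h.1, ?_⟩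
    rcases h.eq_or_eq with ⟨h0, h1⟩ | ⟨h0, h1⟩ <;> rw [h0, h1]
    · exact ⟨bestResp_BD_AC, bestResp_AC_BD⟩
    · exact ⟨bestResp_AC_BD, bestResp_BD_AC⟩
  · rw [isNE_iff]
    refine ⟨?_, bestResp_BC_AD, bestResp_AD_BC⟩
    rw [IsProfile, Fin.forall_fin_two]
    simp [strat17]
  · rcases h.eq_or_eq with ⟨h0, -⟩ | ⟨h0, -⟩
    · exact absurd h0 (by decide)
    · exact absurd h0 (by decide)
end

section
/- Consider the monotone symmetric congestion game G with 2 players, resources R = {A, B, C}, strategy set Σ consisting of all two-element subsets of R, and payoffs P_A(1)=10, P_A(2)=1; P_B(1)=8, P_B(2)=7; P_C(1)=8, P_C(2)=6. Then NE(G) is strictly contained in Z(G): every pure Nash equilibrium of G is a greedy profile, and the profile in which one player plays {A,C} and the other plays {B,C} is a greedy profile that is not a pure Nash equilibrium. -/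
/-!
The game has three strategies and two players, so after transferring the payoffs to `ℤ` every
comparison of utilities is decidable. The pure Nash equilibria turn out to be exactly the two
arrangements of `AB` and `BC`. Each is greedy: the first player takes `AB` (worth `18`, the maximum
over an empty board), and `BC`, worth `7 + 8 = 15`, is then the best response. The profile
`(AC, BC)` is greedy, since `AC` is also worth `18` on an empty board and `BC` (`8 + 6 = 14`) is the
best reply to it; but it is not an equilibrium, since the player on `AC` gets `10 + 6 = 16` and
would get `10 + 7 = 17` on `AB`.
-/


open Finset

/-- Payoffs of Example 3: resources A=0, B=1, C=2; two players. -/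
def pay18 : Fin 3 → ℕ → ℝ := fun r k =>
  if k = 1 then ![10, 8, 8] r
  else if k = 2 then ![1, 7, 6] r
  else 0

/-- Strategy set of Example 3: all two-element subsets of {A, B, C}. -/
def strat18 : Finset (Finset (Fin 3)) := {{0, 1}, {0, 2}, {1, 2}}

/-- The payoffs `pay18` with integer values, so that comparisons can be decided by evaluation. -/
def payInt18 : Fin 3 → ℕ → ℤ := fun r k =>
  if k = 1 then ![10, 8, 8] r
  else if k = 2 then ![1, 7, 6] r
  else 0

lemma pay18_eq_cast (r : Fin 3) (k : ℕ) : pay18 r k = (payInt18 r k : ℝ) := by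
  unfold pay18 payInt18
  split_ifs <;> fin_cases r <;> simp

lemma cgUtil_pay18 (s : Fin 2 → Finset (Fin 3)) (i : Fin 2) :
    cgUtil pay18 s i = ((∑ r ∈ s i, payInt18 r (cgCong s r) : ℤ) : ℝ) := by
  simp [cgUtil, pay18_eq_cast]

lemma isNE_iff_int (s : Fin 2 → Finset (Fin 3)) :
    IsNE strat18 pay18 s ↔ (∀ i, s i ∈ strat18) ∧ ∀ i : Fin 2, ∀ t ∈ strat18,
      ∑ r ∈ Function.update s i t i, payInt18 r (cgCong (Function.update s i t) r) ≤
        ∑ r ∈ s i, payInt18 r (cgCong s r) := by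
  simp only [IsNE, IsProfile, cgUtil_pay18, ge_iff_le, Int.cast_le]

lemma isGreedy_of_int (s : Fin 2 → Finset (Fin 3)) (π : Fin 2 → ℕ)
    (hs : ∀ i, s i ∈ strat18) (hπ : Function.Injective π)
    (h : ∀ i : Fin 2, ∀ t ∈ strat18,
      ∑ r ∈ t, payInt18 r (greedyCong s π i r + 1) ≤
        ∑ r ∈ s i, payInt18 r (greedyCong s π i r + 1)) :
    IsGreedy strat18 pay18 s := by
  refine ⟨hs, π, hπ, fun i t ht => ?_⟩
  simp only [pay18_eq_cast, ge_iff_le]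
  exact_mod_cast h i t ht

/-- The only pure Nash equilibria are the two arrangements of `AB` and `BC`. -/
lemma isNE_classification (s : Fin 2 → Finset (Fin 3)) (h : IsNE strat18 pay18 s) :
    s = ![{0, 1}, {1, 2}] ∨ s = ![{1, 2}, {0, 1}] := by
  rw [isNE_iff_int] at h
  obtain ⟨hs, h⟩ := h
  have key : ∀ a ∈ strat18, ∀ b ∈ strat18,
      (∀ i : Fin 2, ∀ t ∈ strat18,
        ∑ r ∈ Function.update ![a, b] i t i,
            payInt18 r (cgCong (Function.update ![a, b] i t) r) ≤
          ∑ r ∈ ![a, b] i, payInt18 r (cgCong ![a, b] r)) →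
      ![a, b] = ![{0, 1}, {1, 2}] ∨ ![a, b] = ![{1, 2}, {0, 1}] := by
    decide +kernel
  have hab : s = ![s 0, s 1] := by
    ext i : 1
    fin_cases i <;> rfl
  have := key (s 0) (hs 0) (s 1) (hs 1)
  rw [← hab] at this
  exact this h

/-- In the 2-player game of Example 3, Nash equilibria are strictly contained
in greedy profiles: every pure NE is greedy, while the profile `(AC, BC)` is a
greedy profile that is not a pure NE. -/
theorem NE_strict_subset_greedy :
    (∀ s : Fin 2 → Finset (Fin 3),
        IsNE strat18 pay18 s → IsGreedy strat18 pay18 s) ∧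
      IsGreedy strat18 pay18 ![{0, 2}, {1, 2}] ∧
      ¬ IsNE strat18 pay18 ![{0, 2}, {1, 2}] := by
  refine ⟨fun s h => ?_, ?_, fun h => ?_⟩
  · rcases isNE_classification s h with rfl | rfl
    -- In both arrangements `π` lets the player on `AB` move first.
    · exact isGreedy_of_int _ ![0, 1] (by decide) (by decide) (by decide +kernel)
    · exact isGreedy_of_int _ ![1, 0] (by decide) (by decide) (by decide +kernel)
  · exact isGreedy_of_int _ ![0, 1] (by decide) (by decide) (by decide +kernel)
  · exact absurd (isNE_classification _ h) (by decide)
end
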